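/- arXiv:0904.2040 — 2 statements merged into one kernel-verified Lean document; each statement's English description precedes it below -/
import Mathlib

section
/- Let w be a weight function on [-1,1] and let (π_k)_{k≤n} be orthonormal polynomials for w satisfying the three-term recurrence β_{k+1}π_{k+1}(s) = (s−α_k)π_k(s) − β_kπ_{k−1}(s) with π_{−1}=0, π_0=1, β_k > 0, and let J_n be the associated n×n Jacobi matrix. Let (λ_i, ν_i)_{i<n} be an n-point Gauss quadrature rule for w whose nodes are zeros of π_n. Then for every function f : ℝ → ℝ and for every orthogonal n×n matrix Q and diagonal n×n matrix Λ with J_n = Q Λ Qᵀ, the matrix f(J_n) := Q · diag(f(Λ_{00}),…,f(Λ_{n−1,n−1})) · Qᵀ satisfies, for all i, j < n, (f(J_n))_{ij} = Σ_{k<n} ν_k f(λ_k) π_i(λ_k) π_j(λ_k); in particular f(J_n) equals the matrix of Gauss quadrature approximations ⟨f π_i π_j⟩_n and is independent of the chosen eigendecomposition. -/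
open MeasureTheory Polynomial Matrix

/-- The `n × n` symmetric tridiagonal Jacobi matrix with diagonal entries
`α 0, …, α (n-1)` and off-diagonal entries `β 1, …, β (n-1)`. -/
def jacobiMatrix (α β : ℕ → ℝ) (n : ℕ) : Matrix (Fin n) (Fin n) ℝ :=
  Matrix.of fun i j =>
    if (i : ℕ) = (j : ℕ) then α (i : ℕ)
    else if (i : ℕ) + 1 = (j : ℕ) ∨ (j : ℕ) + 1 = (i : ℕ) then β (max (i : ℕ) (j : ℕ))
    else 0

/-!
Evaluate the recurrence at a zero `λ` of `π n`: the boundary term `β n * π n λ` vanishes, so the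
vector `(π 0 λ, …, π (n-1) λ)` is an eigenvector of the Jacobi matrix `J`. With `P` the matrix
whose columns are these vectors at the `n` nodes, `J * P = P * diagonal λ`. Exactness of the
quadrature rule turns orthonormality into `P * diagonal ν * Pᵀ = 1`, so `P * diagonal λ * P⁻¹`
with `P⁻¹ = diagonal ν * Pᵀ` is a diagonalization of `J`. Any two diagonalizations of a matrix
define the same function of it, because a matrix intertwining two diagonal matrices also
intertwines their images under `f`.
-/

section Diagonalization

variable {R m n : Type*} [Fintype m] [Fintype n] [DecidableEq m] [DecidableEq n]

theorem diagonal_comp_mul_eq_mul_diagonal_comp [CommSemiring R] [IsCancelMulZero R]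
    {d : m → R} {e : n → R} {A : Matrix m n R} (h : diagonal d * A = A * diagonal e) (f : R → R) :
    diagonal (f ∘ d) * A = A * diagonal (f ∘ e) := by
  ext i j
  have hij : d i * A i j = e j * A i j := by
    simpa only [diagonal_mul, mul_diagonal, mul_comm (A i j)] using congrFun₂ h i j
  rw [diagonal_mul, mul_diagonal, mul_comm (A i j)]
  rcases mul_eq_mul_right_iff.mp hij with hde | hA
  · simp only [Function.comp_apply, hde]
  · rw [hA, mul_zero, mul_zero]

theorem mul_diagonal_comp_mul_eq_of_diagonalizations_eq [CommRing R] [IsCancelMulZero R]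
    {d e : n → R} {Q Q' P P' : Matrix n n R} (hQ : Q * Q' = 1) (hP : P * P' = 1)
    (h : Q * diagonal d * Q' = P * diagonal e * P') (f : R → R) :
    Q * diagonal (f ∘ d) * Q' = P * diagonal (f ∘ e) * P' := by
  have intertwine : diagonal d * (Q' * P) = Q' * P * diagonal e :=
    calc diagonal d * (Q' * P)
        = Q' * Q * diagonal d * Q' * P := by rw [mul_eq_one_comm.mp hQ, one_mul, Matrix.mul_assoc]
      _ = Q' * (Q * diagonal d * Q') * P := by simp only [Matrix.mul_assoc]
      _ = Q' * P * diagonal e * (P' * P) := by rw [h]; simp only [Matrix.mul_assoc]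
      _ = Q' * P * diagonal e := by rw [mul_eq_one_comm.mp hP, mul_one]
  calc Q * diagonal (f ∘ d) * Q'
      = Q * diagonal (f ∘ d) * Q' * (P * P') := by rw [hP, mul_one]
    _ = Q * (diagonal (f ∘ d) * (Q' * P)) * P' := by simp only [Matrix.mul_assoc]
    _ = Q * Q' * P * diagonal (f ∘ e) * P' := by
      rw [diagonal_comp_mul_eq_mul_diagonal_comp intertwine f]; simp only [Matrix.mul_assoc]
    _ = P * diagonal (f ∘ e) * P' := by rw [hQ, one_mul]

end Diagonalization

/-- The `n × ι` matrix of values of the polynomials `π 0, …, π (n-1)` at the nodes `x`: a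
generalized Vandermonde matrix, with one row per polynomial and one column per node. -/
def nodeMatrix {R ι : Type*} [Semiring R] (π : ℕ → R[X]) (n : ℕ) (x : ι → R) :
    Matrix (Fin n) ι R :=
  Matrix.of fun i k => (π i).eval (x k)

section Quadrature

variable {R ι : Type*} [CommSemiring R] [Fintype ι] [DecidableEq ι]
  {π : ℕ → R[X]} {n : ℕ} {x ν : ι → R}

theorem nodeMatrix_mul_diagonal_mul_transpose_apply (c : ι → R) (i j : Fin n) :
    (nodeMatrix π n x * diagonal c * (nodeMatrix π n x)ᵀ) i j
      = ∑ k, c k * (π i).eval (x k) * (π j).eval (x k) := by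
  rw [mul_apply]
  simp only [nodeMatrix, mul_diagonal, transpose_apply, of_apply, mul_comm (eval _ (π i))]

theorem nodeMatrix_mul_diagonal_mul_transpose_eq_one (L : R[X] → R)
    (hdeg : ∀ k < n, (π k).degree ≤ k)
    (horth : ∀ j < n, ∀ k < n, L (π j * π k) = if j = k then 1 else 0)
    (hexact : ∀ p : R[X], p.degree < (2 * n : ℕ) → L p = ∑ k, ν k * p.eval (x k)) :
    nodeMatrix π n x * diagonal ν * (nodeMatrix π n x)ᵀ = 1 := by
  ext i j
  have hdeg_mul : (π i * π j).degree < (2 * n : ℕ) :=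
    (degree_mul_le_of_le (hdeg i i.2) (hdeg j j.2)).trans_lt <| by
      exact_mod_cast (by omega : (i + j : ℕ) < 2 * n)
  calc (nodeMatrix π n x * diagonal ν * (nodeMatrix π n x)ᵀ) i j
      = ∑ k, ν k * (π i * π j).eval (x k) := by
        simp only [nodeMatrix_mul_diagonal_mul_transpose_apply, eval_mul, mul_assoc]
    _ = L (π i * π j) := (hexact _ hdeg_mul).symm
    _ = (1 : Matrix (Fin n) (Fin n) R) i j := by
      rw [horth i i.2 j j.2, one_apply]; simp only [Fin.ext_iff]

end Quadrature

section Jacobi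

variable {n : ℕ} {α β : ℕ → ℝ}

theorem jacobiMatrix_apply_eq_add (i j : Fin n) :
    jacobiMatrix α β n i j = (if (j : ℕ) = i then α i else 0)
      + (if (j : ℕ) = i + 1 then β (i + 1) else 0) + (if (j : ℕ) + 1 = i then β i else 0) := by
  simp only [jacobiMatrix, of_apply]
  grind

theorem jacobiMatrix_mulVec_apply (v : ℕ → ℝ) (i : Fin n) :
    (jacobiMatrix α β n *ᵥ fun j => v j) i = α i * v i
      + (if (i : ℕ) + 1 < n then β (i + 1) * v (i + 1) else 0)
      + β i * (if (i : ℕ) = 0 then 0 else v (i - 1)) := by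
  have diag : ∑ j ∈ Finset.range n, (if j = i then α i else 0) * v j = α i * v i := by
    simp
  have super : ∑ j ∈ Finset.range n, (if j = i + 1 then β (i + 1) else 0) * v j
      = if (i : ℕ) + 1 < n then β (i + 1) * v (i + 1) else 0 := by
    simp
  have sub : ∑ j ∈ Finset.range n, (if j + 1 = i then β i else 0) * v j
      = β i * (if (i : ℕ) = 0 then 0 else v (i - 1)) := by
    rcases i with ⟨_ | i, hi⟩
    · simp
    · simp [Nat.lt_of_succ_lt hi]
  simp only [mulVec, dotProduct, jacobiMatrix_apply_eq_add]
  rw [← diag, ← super, ← sub, ← Finset.sum_add_distrib, ← Finset.sum_add_distrib,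
    Finset.sum_range]
  simp only [add_mul]

theorem jacobiMatrix_mulVec_eq_smul {v : ℕ → ℝ} {x : ℝ}
    (hrec : ∀ k < n, β (k + 1) * v (k + 1)
      = (x - α k) * v k - β k * (if k = 0 then 0 else v (k - 1)))
    (hv : v n = 0) :
    (jacobiMatrix α β n *ᵥ fun j => v j) = x • fun j : Fin n => v j := by
  ext i
  have boundary : (if (i : ℕ) + 1 < n then β (i + 1) * v (i + 1) else 0)
      = β (i + 1) * v (i + 1) := by
    split_ifs with h
    · rfl
    · rw [show (i : ℕ) + 1 = n by omega, hv, mul_zero]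
  rw [jacobiMatrix_mulVec_apply, boundary, hrec i i.2, Pi.smul_apply, smul_eq_mul]
  ring

theorem jacobiMatrix_mul_nodeMatrix {ι : Type*} [Fintype ι] [DecidableEq ι]
    {π : ℕ → ℝ[X]} {x : ι → ℝ}
    (hrec : ∀ k < n, ∀ s, β (k + 1) * (π (k + 1)).eval s
      = (s - α k) * (π k).eval s - β k * (if k = 0 then 0 else (π (k - 1)).eval s))
    (hzeros : ∀ i, (π n).eval (x i) = 0) :
    jacobiMatrix α β n * nodeMatrix π n x = nodeMatrix π n x * diagonal x := by
  ext i k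
  have eigenvector := congrFun (jacobiMatrix_mulVec_eq_smul (v := fun j => (π j).eval (x k))
    (fun j hj => hrec j hj (x k)) (hzeros k)) i
  rw [mul_diagonal, mul_comm]
  exact eigenvector

end Jacobi

theorem matrixFunction_jacobiMatrix_entry_eq_quadrature_general
    {n : ℕ} {π : ℕ → ℝ[X]} {α β : ℕ → ℝ} {lam ν : Fin n → ℝ} (L : ℝ[X] → ℝ)
    (hπdeg : ∀ k < n, (π k).degree ≤ k)
    (hπorth : ∀ j < n, ∀ k < n, L (π j * π k) = if j = k then 1 else 0)
    (hrec : ∀ k < n, ∀ s, β (k + 1) * (π (k + 1)).eval s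
      = (s - α k) * (π k).eval s - β k * (if k = 0 then 0 else (π (k - 1)).eval s))
    (hexact : ∀ p : ℝ[X], p.degree < (2 * n : ℕ) → L p = ∑ i, ν i * p.eval (lam i))
    (hzeros : ∀ i, (π n).eval (lam i) = 0)
    (f : ℝ → ℝ) {Q Q' : Matrix (Fin n) (Fin n) ℝ} {d : Fin n → ℝ} (hQ : Q * Q' = 1)
    (hJ : jacobiMatrix α β n = Q * diagonal d * Q') (i j : Fin n) :
    (Q * diagonal (fun k => f (d k)) * Q') i j
      = ∑ k, ν k * f (lam k) * (π i).eval (lam k) * (π j).eval (lam k) := by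
  set P := nodeMatrix π n lam
  have hP : P * (diagonal ν * Pᵀ) = 1 := by
    rw [← Matrix.mul_assoc]
    exact nodeMatrix_mul_diagonal_mul_transpose_eq_one L hπdeg hπorth hexact
  have hJP : jacobiMatrix α β n = P * diagonal lam * (diagonal ν * Pᵀ) := by
    rw [← jacobiMatrix_mul_nodeMatrix hrec hzeros, Matrix.mul_assoc, hP, mul_one]
  calc (Q * diagonal (f ∘ d) * Q') i j
      = (P * diagonal (f ∘ lam) * (diagonal ν * Pᵀ)) i j := by
        rw [mul_diagonal_comp_mul_eq_of_diagonalizations_eq hQ hP (hJ.symm.trans hJP) f]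
    _ = (P * diagonal (fun k => ν k * f (lam k)) * Pᵀ) i j := by
        rw [← Matrix.mul_assoc, Matrix.mul_assoc P, diagonal_mul_diagonal]
        simp only [Function.comp_apply, mul_comm (ν _)]
    _ = ∑ k, ν k * f (lam k) * (π i).eval (lam k) * (π j).eval (lam k) :=
        nodeMatrix_mul_diagonal_mul_transpose_apply _ i j

/-- **Functions of the Jacobi matrix give Gauss quadrature approximations.**
For orthonormal polynomials `π` for a weight `w` on `[-1,1]` with three-term
recurrence coefficients `α`, `β` and Jacobi matrix `J n`, and for an `n`-point
Gauss quadrature rule whose nodes are the zeros of `π n`: for every function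
`f : ℝ → ℝ` and every eigendecomposition `J n = Q * diagonal d * Qᵀ` with `Q`
orthogonal, the matrix `f (J n) := Q * diagonal (f ∘ d) * Qᵀ` has `(i,j)` entry
equal to the Gauss quadrature approximation `⟨f * π i * π j⟩ₙ`; in particular
it is independent of the chosen eigendecomposition. -/
theorem matrixFunction_jacobiMatrix_entry_eq_quadrature
    (n : ℕ) (w : ℝ → ℝ)
    (hw_pos : ∀ s ∈ Set.Icc (-1 : ℝ) 1, 0 < w s)
    (hw_norm : (∫ s in (-1 : ℝ)..1, w s) = 1)
    (π : ℕ → Polynomial ℝ)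
    (hπ0 : π 0 = 1)
    (hπdeg : ∀ k, (π k).degree = (k : ℕ))
    (hπorth : ∀ j k : ℕ, (∫ s in (-1 : ℝ)..1, (π j).eval s * (π k).eval s * w s)
      = if j = k then (1 : ℝ) else 0)
    (α β : ℕ → ℝ) (hβ : ∀ k : ℕ, 0 < β (k + 1))
    (hrec : ∀ (k : ℕ) (s : ℝ), β (k + 1) * (π (k + 1)).eval s
      = (s - α k) * (π k).eval s - β k * (if k = 0 then 0 else (π (k - 1)).eval s))
    (lam ν : Fin n → ℝ)
    (hlam_mem : ∀ i, lam i ∈ Set.Icc (-1 : ℝ) 1)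
    (hlam_inj : Function.Injective lam)
    (hν_pos : ∀ i, 0 < ν i)
    (hexact : ∀ p : Polynomial ℝ, p.degree < (2 * n : ℕ) →
      (∫ s in (-1 : ℝ)..1, p.eval s * w s) = ∑ i, ν i * p.eval (lam i))
    (hzeros : ∀ i, (π n).eval (lam i) = 0) :
    ∀ (f : ℝ → ℝ) (Q : Matrix (Fin n) (Fin n) ℝ) (d : Fin n → ℝ),
      Q * Qᵀ = 1 → Qᵀ * Q = 1 →
      jacobiMatrix α β n = Q * Matrix.diagonal d * Qᵀ →
      ∀ i j : Fin n,
        (Q * Matrix.diagonal (fun k => f (d k)) * Qᵀ) i j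
          = ∑ k : Fin n, ν k * f (lam k) *
              (π (i : ℕ)).eval (lam k) * (π (j : ℕ)).eval (lam k) := by
  intro f Q d hQ _ hJ
  exact matrixFunction_jacobiMatrix_entry_eq_quadrature_general
    (fun p => ∫ s in (-1 : ℝ)..1, p.eval s * w s) (fun k _ => (hπdeg k).le)
    (fun j _ k _ => by simpa only [eval_mul] using hπorth j k) (fun k _ => hrec k)
    hexact hzeros f hQ hJ
end

section
/- Let w be a weight function on [-1,1], let π_0,…,π_{n-1} be the first n orthonormal polynomials for w, and let (λ_i, ν_i)_{i<n} be an n-point Gauss quadrature rule for w. Suppose A(s) = A_0 + s A_1 for constant matrices A_0, A_1 ∈ ℝ^{N×N} (entries of A are polynomials of degree at most 1), suppose every entry of b : ℝ → ℝ^N is a polynomial of degree at most m_b, and suppose n ≥ m_b. Assume A(λ_i) is invertible for each i < n and let X_p be the N×n pseudospectral coefficient matrix with columns X_p(:,k) = Σ_{i<n} ν_i A(λ_i)⁻¹ b(λ_i) π_k(λ_i). Then X_p satisfies the exact Galerkin system: for every j < n, Σ_{k<n} (∫_{-1}^{1} π_j(s) π_k(s) A(s) w(s) ds) · X_p(:,k)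 = ∫_{-1}^{1} π_j(s) b(s) w(s) ds (integrals taken entrywise). Consequently, if the Galerkin system has a unique solution X_g, then the Galerkin and pseudospectral approximations coincide: X_g = X_p. -/
open MeasureTheory Polynomial Matrix

/-- An `N × n` coefficient matrix `X` solves the `n`-term Galerkin system for the
parameterized matrix equation `A(s) x(s) = b(s)` with weight `w` and orthonormal
polynomials `π` if `∑ k, ⟨π j * π k * A⟩ * X(:,k) = ⟨π j * b⟩` for all `j < n`. -/
def GalerkinSolves (N n : ℕ) (w : ℝ → ℝ) (π : ℕ → Polynomial ℝ)
    (A : ℝ → Matrix (Fin N) (Fin N) ℝ) (b : ℝ → Fin N → ℝ)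
    (X : Matrix (Fin N) (Fin n) ℝ) : Prop :=
  ∀ (j : Fin n) (k' : Fin N),
    (∑ k : Fin n, ∑ l : Fin N,
      (∫ s in (-1 : ℝ)..1, (π (j : ℕ)).eval s * (π (k : ℕ)).eval s * A s k' l * w s) * X l k)
    = ∫ s in (-1 : ℝ)..1, (π (j : ℕ)).eval s * b s k' * w s

/-!
An `n`-point Gauss rule computes the products `π j * π k` exactly, so the orthonormality of the
`π k` is a matrix identity `Vᵀ * diagonal ν * V = 1` for the square matrix `V i k = π k (λ i)`.
One-sided inverses of square matrices are two-sided, and `V * (Vᵀ * diagonal ν) = 1` says that the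
pseudospectral approximation interpolates: `X_p *ᵥ π (λ i) = A (λ i)⁻¹ b (λ i)`. The residual
`A X_p π - b` therefore vanishes at every node, and so do its quadrature sums against every `π j`.
Since `A` is affine and `b` has degree at most `n`, the rule is exact on all the Galerkin integrals
(degree at most `2 n - 1`), which turns these sums into the Galerkin equations.
-/

theorem mulVec_inv_mulVec_of_isUnit {R m : Type*} [Fintype m] [DecidableEq m] [CommRing R]
    {A : Matrix m m R} (hA : IsUnit A) (v : m → R) : A *ᵥ (A⁻¹ *ᵥ v) = v := by
  rw [mulVec_mulVec, mul_nonsing_inv _ ((isUnit_iff_isUnit_det A).1 hA), one_mulVec]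

section Discrete

variable {R ι κ m m' : Type*} [CommSemiring R]

/-- The matrix of values of the polynomials `p k` (columns) at the nodes `lam i` (rows). -/
def collocationMatrix (p : κ → R[X]) (lam : ι → R) : Matrix ι κ R :=
  .of fun i k => (p k).eval (lam i)

/-- The pseudospectral coefficients of a function with the value `u i` at the `i`-th node: column
`k` is the quadrature approximation, with weights `ν`, of its `k`-th Fourier coefficient, where
`V i k` is the value at the `i`-th node of the `k`-th basis function. -/
def pseudospectralCoeff [Fintype ι] (ν : ι → R) (V : Matrix ι κ R) (u : ι → m → R) :
    Matrix m κ R :=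
  .of fun l k => ∑ i, ν i * u i l * V i k

theorem pseudospectralCoeff_eq_mul [Fintype ι] [DecidableEq ι] (ν : ι → R) (V : Matrix ι κ R)
    (u : ι → m → R) : pseudospectralCoeff ν V u = (.of u)ᵀ * diagonal ν * V := by
  ext l k
  rw [mul_apply]
  simp [pseudospectralCoeff, mul_diagonal, mul_comm (ν _)]

theorem pseudospectralCoeff_mulVec [Fintype ι] [DecidableEq ι] {ν : ι → R} {V : Matrix ι ι R}
    (hV : Vᵀ * diagonal ν * V = 1) (u : ι → m → R) (i : ι) :
    pseudospectralCoeff ν V u *ᵥ V i = u i := by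
  have hV' : diagonal ν * (V * Vᵀ) = 1 := by
    rwa [Matrix.mul_assoc, mul_eq_one_comm, Matrix.mul_assoc] at hV
  have hX : pseudospectralCoeff ν V u * Vᵀ = (.of u)ᵀ := by
    rw [pseudospectralCoeff_eq_mul, Matrix.mul_assoc, Matrix.mul_assoc, hV', Matrix.mul_one]
  exact funext fun l => congrFun (congrFun hX l) i

theorem sum_sum_mul_eq_sum_mulVec_mulVec [Fintype ι] [Fintype κ] [Fintype m] (τ : ι → R)
    (V : Matrix ι κ R) (B : ι → Matrix m' m R) (Y : Matrix m κ R) (a : m') :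
    ∑ k, ∑ l, (∑ i, τ i * (V i k * B i a l)) * Y l k = ∑ i, τ i * (B i *ᵥ (Y *ᵥ V i)) a := by
  simp only [mulVec, dotProduct, Finset.mul_sum, Finset.sum_mul]
  calc ∑ k, ∑ l, ∑ i, τ i * (V i k * B i a l) * Y l k
      = ∑ k, ∑ i, ∑ l, τ i * (V i k * B i a l) * Y l k :=
        Finset.sum_congr rfl fun _ _ => Finset.sum_comm
    _ = ∑ i, ∑ k, ∑ l, τ i * (V i k * B i a l) * Y l k := Finset.sum_comm
    _ = ∑ i, ∑ l, ∑ k, τ i * (V i k * B i a l) * Y l k :=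
        Finset.sum_congr rfl fun _ _ => Finset.sum_comm
    _ = ∑ i, ∑ l, ∑ k, τ i * (B i a l * (Y l k * V i k)) := by
        congr! 3
        ring

end Discrete

section Exactness

/-- The quadrature rule with nodes `lam` and weights `ν` integrates every polynomial of degree less
than `d` exactly, against `w` from `x` to `y`. An `n`-point Gauss rule is the case `d = 2 * n`. -/
def QuadratureExact {ι : Type*} [Fintype ι] (x y : ℝ) (w : ℝ → ℝ) (d : ℕ) (lam ν : ι → ℝ) : Prop :=
  ∀ p : ℝ[X], p.degree < d → ∫ s in x..y, p.eval s * w s = ∑ i, ν i * p.eval (lam i)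

namespace QuadratureExact

variable {ι κ κ' : Type*} [Fintype ι] {x y : ℝ} {w : ℝ → ℝ} {d e : ℕ} {lam ν : ι → ℝ} {p q : ℝ[X]}

theorem integral_mul (h : QuadratureExact x y w (d + e) lam ν) (hp : p.degree < d)
    (hq : q.degree ≤ e) :
    ∫ s in x..y, p.eval s * q.eval s * w s =
      ∑ i, ν i * (p.eval (lam i) * q.eval (lam i)) := by
  have hpq : (p * q).degree < (d + e : ℕ) := by
    rw [Nat.cast_add]
    exact (degree_mul_le_of_le le_rfl hq).trans_lt
      (WithBot.add_lt_add_right (WithBot.natCast_ne_bot e) hp)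
  simpa only [eval_mul] using h (p * q) hpq

theorem integral_mul_mul_affine (h : QuadratureExact x y w (d + e) lam ν) (hp : p.degree < d)
    (hq : q.degree < e) (c₀ c₁ : ℝ) :
    ∫ s in x..y, p.eval s * q.eval s * (c₀ + s * c₁) * w s =
      ∑ i, ν i * (p.eval (lam i) * (q.eval (lam i) * (c₀ + lam i * c₁))) := by
  have hdeg : (q * (C c₁ * X + C c₀)).degree ≤ (e : WithBot ℕ) :=
    (degree_mul_le_of_le le_rfl degree_linear_le).trans (Nat.WithBot.add_one_le_of_lt hq)
  simpa [mul_assoc, add_comm, mul_comm c₁] using h.integral_mul hp hdeg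

theorem transpose_mul_diagonal_mul_collocationMatrix [DecidableEq ι]
    (h : QuadratureExact x y w (d + e) lam ν) {p : κ → ℝ[X]} {q : κ' → ℝ[X]}
    (hp : ∀ j, (p j).degree < d) (hq : ∀ k, (q k).degree ≤ e) :
    (collocationMatrix p lam)ᵀ * diagonal ν * collocationMatrix q lam =
      .of fun j k => ∫ s in x..y, (p j).eval s * (q k).eval s * w s := by
  ext j k
  rw [mul_apply, of_apply, h.integral_mul (hp j) (hq k)]
  simp [collocationMatrix, mul_diagonal, mul_assoc, mul_left_comm]

end QuadratureExact

end Exactness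

theorem galerkinSolves_of_collocation {n N : ℕ} {w : ℝ → ℝ} {π : ℕ → ℝ[X]}
    (hπdeg : ∀ k < n, (π k).degree < n) {lam ν : Fin n → ℝ}
    (hexact : QuadratureExact (-1) 1 w (2 * n) lam ν)
    {A₀ A₁ : Matrix (Fin N) (Fin N) ℝ} {b : ℝ → Fin N → ℝ}
    (hb : ∀ a, ∃ q : ℝ[X], q.degree ≤ n ∧ ∀ s, b s a = q.eval s)
    {Y : Matrix (Fin N) (Fin n) ℝ}
    (hY : ∀ i, (A₀ + lam i • A₁) *ᵥ (Y *ᵥ fun k => (π k).eval (lam i)) = b (lam i)) :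
    GalerkinSolves N n w π (fun s => A₀ + s • A₁) b Y := by
  rw [two_mul] at hexact
  intro j a
  obtain ⟨q, hq, hbq⟩ := hb a
  let V : Matrix (Fin n) (Fin n) ℝ := collocationMatrix (fun k : Fin n => π k) lam
  have hlhs (k : Fin n) (l : Fin N) :
      ∫ s in (-1 : ℝ)..1, (π j).eval s * (π k).eval s * (A₀ + s • A₁) a l * w s =
        ∑ i, ν i * V i j * (V i k * (A₀ + lam i • A₁) a l) := by
    simpa [V, collocationMatrix, mul_assoc] using
      hexact.integral_mul_mul_affine (hπdeg j j.isLt) (hπdeg k k.isLt) (A₀ a l) (A₁ a l)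
  have hrhs : ∫ s in (-1 : ℝ)..1, (π j).eval s * b s a * w s =
      ∑ i, ν i * V i j * b (lam i) a := by
    simpa [V, collocationMatrix, hbq, mul_assoc] using hexact.integral_mul (hπdeg j j.isLt) hq
  calc
    _ = ∑ k, ∑ l, (∑ i, ν i * V i j * (V i k * (A₀ + lam i • A₁) a l)) * Y l k := by
      simp only [hlhs]
    _ = ∑ i, ν i * V i j * ((A₀ + lam i • A₁) *ᵥ (Y *ᵥ V i)) a :=
      sum_sum_mul_eq_sum_mulVec_mulVec _ V (fun i => A₀ + lam i • A₁) Y a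
    _ = ∑ i, ν i * V i j * b (lam i) a :=
      Finset.sum_congr rfl fun i _ => congrArg (ν i * V i j * · a) (hY i)
    _ = _ := hrhs.symm

theorem galerkin_eq_pseudospectral_of_linear_general {n N : ℕ} {w : ℝ → ℝ} {π : ℕ → ℝ[X]}
    (hπdeg : ∀ k < n, (π k).degree < n)
    (hπorth : ∀ j < n, ∀ k < n,
      ∫ s in (-1 : ℝ)..1, (π j).eval s * (π k).eval s * w s = if j = k then 1 else 0)
    {lam ν : Fin n → ℝ} (hexact : QuadratureExact (-1) 1 w (2 * n) lam ν)
    {A₀ A₁ : Matrix (Fin N) (Fin N) ℝ} {b : ℝ → Fin N → ℝ}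
    (hb : ∀ a, ∃ q : ℝ[X], q.degree ≤ n ∧ ∀ s, b s a = q.eval s)
    {u : Fin n → Fin N → ℝ} (hu : ∀ i, (A₀ + lam i • A₁) *ᵥ u i = b (lam i))
    {Xp : Matrix (Fin N) (Fin n) ℝ}
    (hXp : Xp = pseudospectralCoeff ν (collocationMatrix (fun k : Fin n => π k) lam) u) :
    GalerkinSolves N n w π (fun s => A₀ + s • A₁) b Xp ∧
    ∀ Xg : Matrix (Fin N) (Fin n) ℝ,
      (∀ Y, GalerkinSolves N n w π (fun s => A₀ + s • A₁) b Y → Y = Xg) → Xg = Xp := by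
  let V : Matrix (Fin n) (Fin n) ℝ := collocationMatrix (fun k : Fin n => π k) lam
  have hexact' : QuadratureExact (-1) 1 w (n + n) lam ν := two_mul n ▸ hexact
  have hV : Vᵀ * diagonal ν * V = 1 := by
    rw [hexact'.transpose_mul_diagonal_mul_collocationMatrix
      (fun j : Fin n => hπdeg j j.isLt) fun k : Fin n => (hπdeg k k.isLt).le]
    ext j k
    simp [hπorth, one_apply, Fin.ext_iff]
  have hinterp (i : Fin n) : Xp *ᵥ V i = u i := hXp ▸ pseudospectralCoeff_mulVec hV u i
  have hsolves : GalerkinSolves N n w π (fun s => A₀ + s • A₁) b Xp :=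
    galerkinSolves_of_collocation hπdeg hexact hb fun i =>
      (congrArg ((A₀ + lam i • A₁) *ᵥ ·) (hinterp i)).trans (hu i)
  exact ⟨hsolves, fun Xg hunique => (hunique Xp hsolves).symm⟩

/-- **Equivalence of Galerkin and pseudospectral approximations for linear `A` and
polynomial `b`.**  If `A(s) = A₀ + s A₁` and every entry of `b` is a polynomial of
degree at most `m_b ≤ n`, then the pseudospectral coefficient matrix `Xp` (computed
with an `n`-point Gauss rule) satisfies the exact Galerkin system; consequently if the
Galerkin system has a unique solution `Xg`, then `Xg = Xp`. -/
theorem galerkin_eq_pseudospectral_of_linear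
    (n N m_b : ℕ) (w : ℝ → ℝ)
    (hw_pos : ∀ s ∈ Set.Icc (-1 : ℝ) 1, 0 < w s)
    (hw_norm : (∫ s in (-1 : ℝ)..1, w s) = 1)
    (π : ℕ → Polynomial ℝ)
    (hπdeg : ∀ k, (π k).degree = (k : ℕ))
    (hπorth : ∀ j k : ℕ, (∫ s in (-1 : ℝ)..1, (π j).eval s * (π k).eval s * w s)
      = if j = k then (1 : ℝ) else 0)
    (lam ν : Fin n → ℝ)
    (hlam_mem : ∀ i, lam i ∈ Set.Icc (-1 : ℝ) 1)
    (hlam_inj : Function.Injective lam)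
    (hν_pos : ∀ i, 0 < ν i)
    (hexact : ∀ p : Polynomial ℝ, p.degree < (2 * n : ℕ) →
      (∫ s in (-1 : ℝ)..1, p.eval s * w s) = ∑ i, ν i * p.eval (lam i))
    (A₀ A₁ : Matrix (Fin N) (Fin N) ℝ) (b : ℝ → Fin N → ℝ)
    (hb : ∀ k : Fin N, ∃ q : Polynomial ℝ, q.degree ≤ (m_b : ℕ) ∧ ∀ s, b s k = q.eval s)
    (hnm : m_b ≤ n)
    (hAinv : ∀ i, IsUnit (A₀ + lam i • A₁))
    (Xp : Matrix (Fin N) (Fin n) ℝ)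
    (hXp : ∀ (l : Fin N) (k : Fin n),
      Xp l k = ∑ i : Fin n,
        ν i * ((A₀ + lam i • A₁)⁻¹ *ᵥ b (lam i)) l * (π (k : ℕ)).eval (lam i)) :
    GalerkinSolves N n w π (fun s => A₀ + s • A₁) b Xp ∧
    ∀ Xg : Matrix (Fin N) (Fin n) ℝ,
      GalerkinSolves N n w π (fun s => A₀ + s • A₁) b Xg →
      (∀ Y : Matrix (Fin N) (Fin n) ℝ,
        GalerkinSolves N n w π (fun s => A₀ + s • A₁) b Y → Y = Xg) →
      Xg = Xp := by
  have hgeneral := galerkin_eq_pseudospectral_of_linear_general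
    (fun k hk => (hπdeg k).trans_lt (mod_cast hk)) (fun j _ k _ => hπorth j k) hexact
    (fun a => (hb a).imp fun _ hq => hq.imp_left (·.trans (mod_cast hnm)))
    (fun i => mulVec_inv_mulVec_of_isUnit (hAinv i) _) (Matrix.ext hXp)
  exact hgeneral.imp_right fun hunique Xg _ => hunique Xg
end
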